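/- arXiv:1410.3118 — 2 statements merged into one kernel-verified Lean document; each statement's English description precedes it below -/
import Mathlib

section
/- Strong convexity of the entropy prox-function in the ℓ1 norm with constant 1: for all x, y in the unit simplex S_n and all t ∈ [0,1], V(t·x + (1−t)·y) ≤ t·V(x) + (1−t)·V(y) − (t(1−t)/2)·‖x − y‖_1², where ‖z‖_1 = Σ_{i=1}^n |z_i|. -/
/-!
The convexity gap of the negative entropy is a Jensen–Shannon divergence: with
`m = t x + (1 - t) y`,
`t V(x) + (1 - t) V(y) - V(m) = t KL(x ‖ m) + (1 - t) KL(y ‖ m)`.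
Pinsker's inequality `KL(a ‖ b) ≥ ‖a - b‖₁² / 2` (`pinsker_fin`), applied to both terms with
`x - m = (1 - t) (x - y)` and `y - m = -t (x - y)`, bounds this below by
`(t (1 - t)² + (1 - t) t²) / 2 * ‖x - y‖₁² = t (1 - t) / 2 * ‖x - y‖₁²`.

Pinsker's inequality follows from the pointwise bound
`a log (a / b) - a + b ≥ (3 / 2) (a - b)² / (a + 2 b)` (`three_halves_sq_div_le`) by summing and
applying Cauchy–Schwarz, since `∑ (a i + 2 b i) = 3`.
-/

/-- The difference of the two sides of `rational_le_log` has derivative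
`(u - 1)³ / (u (u + 2))²`, so it is minimal at `u = 1`. -/
lemma hasDerivAt_log_sub_rational {u : ℝ} (hu : 0 < u) :
    HasDerivAt (fun u : ℝ => Real.log u - (5 * u ^ 2 - 4 * u - 1) / (2 * u ^ 2 + 4 * u))
      ((u - 1) ^ 3 / (u * (u + 2)) ^ 2) u := by
  have hD : 2 * u ^ 2 + 4 * u ≠ 0 := by positivity
  have hN : HasDerivAt (fun u : ℝ => 5 * u ^ 2 - 4 * u - 1) (10 * u - 4) u := by
    refine ((((hasDerivAt_id u).pow 2).const_mul 5).sub
      ((hasDerivAt_id u).const_mul 4)).sub_const 1 |>.congr_deriv ?_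
    simp; ring
  have hE : HasDerivAt (fun u : ℝ => 2 * u ^ 2 + 4 * u) (4 * u + 4) u := by
    refine ((((hasDerivAt_id u).pow 2).const_mul 2).add
      ((hasDerivAt_id u).const_mul 4)) |>.congr_deriv ?_
    simp; ring
  refine ((Real.hasDerivAt_log hu.ne').sub (hN.div hE hD)).congr_deriv ?_
  have h2 : u + 2 ≠ 0 := by positivity
  have hf : 2 * u ^ 2 + 4 * u = 2 * (u * (u + 2)) := by ring
  rw [hf]
  field_simp
  ring

lemma rational_le_log {u : ℝ} (hu : 0 < u) :
    (5 * u ^ 2 - 4 * u - 1) / (2 * u ^ 2 + 4 * u) ≤ Real.log u := by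
  set G : ℝ → ℝ := fun u => Real.log u - (5 * u ^ 2 - 4 * u - 1) / (2 * u ^ 2 + 4 * u) with hG
  have hG1 : G 1 = 0 := by norm_num [hG]
  suffices h : G 1 ≤ G u by
    rw [hG1] at h
    exact sub_nonneg.mp h
  rcases le_total 1 u with h1 | h1
  · have hmono : MonotoneOn G (Set.Ici 1) := by
      refine monotoneOn_of_hasDerivWithinAt_nonneg (convex_Ici 1)
        (f' := fun v => (v - 1) ^ 3 / (v * (v + 2)) ^ 2) ?_ ?_ ?_
      · intro v hv
        exact (hasDerivAt_log_sub_rational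
          (lt_of_lt_of_le one_pos hv)).continuousAt.continuousWithinAt
      · intro v hv
        rw [interior_Ici] at hv
        exact (hasDerivAt_log_sub_rational (lt_trans one_pos hv)).hasDerivWithinAt
      · intro v hv
        rw [interior_Ici] at hv
        have : 0 ≤ v - 1 := sub_nonneg.mpr (le_of_lt hv)
        positivity
    exact hmono Set.self_mem_Ici h1 h1
  · have hanti : AntitoneOn G (Set.Ioc 0 1) := by
      refine antitoneOn_of_hasDerivWithinAt_nonpos (convex_Ioc 0 1)
        (f' := fun v => (v - 1) ^ 3 / (v * (v + 2)) ^ 2) ?_ ?_ ?_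
      · intro v hv
        exact (hasDerivAt_log_sub_rational hv.1).continuousAt.continuousWithinAt
      · intro v hv
        rw [interior_Ioc] at hv
        exact (hasDerivAt_log_sub_rational hv.1).hasDerivWithinAt
      · intro v hv
        rw [interior_Ioc] at hv
        refine div_nonpos_of_nonpos_of_nonneg ?_ (sq_nonneg _)
        exact Odd.pow_nonpos (by decide) (by linarith [hv.2])
    exact hanti ⟨hu, h1⟩ ⟨one_pos, le_refl 1⟩ h1

/-- Pointwise form of Pinsker's inequality. When `b = 0` both sides vanish, by the conventions
`0 / 0 = 0` and `log 0 = 0`. -/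
lemma three_halves_sq_div_le {a b : ℝ} (ha : 0 ≤ a) (hb : 0 ≤ b) (hab : b = 0 → a = 0) :
    3 / 2 * ((a - b) ^ 2 / (a + 2 * b)) ≤ a * Real.log a - a * Real.log b - a + b := by
  rcases hb.eq_or_lt with rfl | hb
  · simp [hab rfl]
  rcases ha.eq_or_lt with rfl | ha
  · have : 3 / 2 * ((0 - b) ^ 2 / (0 + 2 * b)) = 3 / 4 * b := by field_simp; ring
    rw [this]
    linarith
  have h := mul_le_mul_of_nonneg_left (rational_le_log (div_pos ha hb)) ha.le
  rw [Real.log_div ha.ne' hb.ne'] at h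
  have hs : a + 2 * b ≠ 0 := by positivity
  have key : a * ((5 * (a / b) ^ 2 - 4 * (a / b) - 1) / (2 * (a / b) ^ 2 + 4 * (a / b)))
      = 3 / 2 * ((a - b) ^ 2 / (a + 2 * b)) + a - b := by
    have hf : 2 * (a / b) ^ 2 + 4 * (a / b) = 2 * a * (a + 2 * b) / b ^ 2 := by
      field_simp
      ring
    rw [hf]
    field_simp
    ring
  rw [key] at h
  linarith

/-- Pinsker's inequality on a finite simplex, for `a` absolutely continuous with respect to
`b`. -/
lemma pinsker_fin {n : ℕ} {a b : Fin n → ℝ} (ha : a ∈ stdSimplex ℝ (Fin n))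
    (hb : b ∈ stdSimplex ℝ (Fin n)) (hab : ∀ i, b i = 0 → a i = 0) :
    (∑ i, |a i - b i|) ^ 2 / 2 ≤ ∑ i, (a i * Real.log (a i) - a i * Real.log (b i)) := by
  have hsum := Finset.sum_le_sum fun i (_ : i ∈ Finset.univ) =>
    three_halves_sq_div_le (ha.1 i) (hb.1 i) (hab i)
  have hR : ∑ i, (a i * Real.log (a i) - a i * Real.log (b i) - a i + b i)
      = ∑ i, (a i * Real.log (a i) - a i * Real.log (b i)) := by
    rw [Finset.sum_add_distrib, Finset.sum_sub_distrib, ha.2, hb.2]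
    ring
  rw [hR, ← Finset.mul_sum] at hsum
  have hden : ∀ i, 0 ≤ a i + 2 * b i := fun i => by linarith [ha.1 i, hb.1 i]
  have hcs : (∑ i, |a i - b i|) ^ 2
      ≤ (∑ i, (a i - b i) ^ 2 / (a i + 2 * b i)) * ∑ i, (a i + 2 * b i) := by
    refine Finset.sum_sq_le_sum_mul_sum_of_sq_le_mul _
      (fun i _ => div_nonneg (sq_nonneg _) (hden i)) (fun i _ => hden i) fun i _ => ?_
    rw [sq_abs]
    by_cases h0 : b i = 0
    · simp [h0, hab i h0]
    · have : 0 < b i := lt_of_le_of_ne (hb.1 i) (Ne.symm h0)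
      have := ha.1 i
      rw [div_mul_cancel₀ _ (by positivity)]
  have h3 : ∑ i, (a i + 2 * b i) = 3 := by
    rw [Finset.sum_add_distrib, ← Finset.mul_sum, ha.2, hb.2]
    norm_num
  rw [h3] at hcs
  linarith


/-- Strong convexity of the entropy prox-function `V(x) = ln n + Σᵢ xᵢ ln xᵢ`
in the ℓ1 norm with constant 1: for all `x, y` in the unit simplex and `t ∈ [0,1]`,
`V(t x + (1−t) y) ≤ t V(x) + (1−t) V(y) − (t(1−t)/2) ‖x − y‖₁²`. -/
theorem entropy_strongConvex_l1 (n : ℕ) (x y : Fin n → ℝ)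
    (hx : x ∈ stdSimplex ℝ (Fin n)) (hy : y ∈ stdSimplex ℝ (Fin n))
    (t : ℝ) (ht0 : 0 ≤ t) (ht1 : t ≤ 1) :
    (Real.log n + ∑ i, (t * x i + (1 - t) * y i) * Real.log (t * x i + (1 - t) * y i)) ≤
      t * (Real.log n + ∑ i, x i * Real.log (x i)) +
        (1 - t) * (Real.log n + ∑ i, y i * Real.log (y i)) -
        (t * (1 - t) / 2) * (∑ i, |x i - y i|) ^ 2 := by
  -- At the endpoints `t x + (1 - t) y` need not dominate both `x` and `y`, but the claim is an equality.
  rcases ht0.eq_or_lt with rfl | h0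
  · simp
  rcases ht1.eq_or_lt with rfl | h1
  · simp
  set m : Fin n → ℝ := fun i => t * x i + (1 - t) * y i with hm
  have h1' : 0 < 1 - t := sub_pos.mpr h1
  have hmS : m ∈ stdSimplex ℝ (Fin n) :=
    convex_stdSimplex ℝ (Fin n) hx hy ht0 h1'.le (by ring)
  have hzero : ∀ i, m i = 0 → x i = 0 ∧ y i = 0 := by
    intro i hi
    have hx' := mul_nonneg ht0 (hx.1 i)
    have hy' := mul_nonneg h1'.le (hy.1 i)
    have hi' : t * x i + (1 - t) * y i = 0 := hi
    obtain ⟨ha, hb⟩ := (add_eq_zero_iff_of_nonneg hx' hy').mp hi'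
    exact ⟨(mul_eq_zero.mp ha).resolve_left h0.ne', (mul_eq_zero.mp hb).resolve_left h1'.ne'⟩
  have hpx := pinsker_fin hx hmS fun i hi => (hzero i hi).1
  have hpy := pinsker_fin hy hmS fun i hi => (hzero i hi).2
  have hdx : ∑ i, |x i - m i| = (1 - t) * ∑ i, |x i - y i| := by
    rw [Finset.mul_sum]
    refine Finset.sum_congr rfl fun i _ => ?_
    rw [← abs_of_pos h1', ← abs_mul]
    congr 1
    simp only [hm]; ring
  have hdy : ∑ i, |y i - m i| = t * ∑ i, |x i - y i| := by
    rw [Finset.mul_sum]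
    refine Finset.sum_congr rfl fun i _ => ?_
    rw [← abs_of_pos h0, ← abs_mul, abs_sub_comm]
    congr 1
    simp only [hm]; ring
  rw [hdx] at hpx
  rw [hdy] at hpy
  have hgap : t * ∑ i, (x i * Real.log (x i) - x i * Real.log (m i))
      + (1 - t) * ∑ i, (y i * Real.log (y i) - y i * Real.log (m i))
      = t * ∑ i, x i * Real.log (x i) + (1 - t) * ∑ i, y i * Real.log (y i)
        - ∑ i, m i * Real.log (m i) := by
    simp only [Finset.mul_sum, ← Finset.sum_add_distrib, ← Finset.sum_sub_distrib]
    refine Finset.sum_congr rfl fun i _ => ?_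
    have : m i = t * x i + (1 - t) * y i := rfl
    linear_combination (Real.log (m i)) * this
  have hX := mul_le_mul_of_nonneg_left hpx ht0
  have hY := mul_le_mul_of_nonneg_left hpy h1'.le
  change Real.log n + ∑ i, m i * Real.log (m i) ≤ _
  linarith
end

section
/- Lipschitz continuity of the softmax map (equivalently, of the gradient of W_β) from ℓ∞ to ℓ1: for every β > 0 and all y, ỹ ∈ ℝ^n, Σ_{i=1}^n | σ_β(ỹ)_i − σ_β(y)_i | ≤ (1/β) · max_{i=1,…,n} | ỹ_i − y_i |. -/
/-!
Along the segment `z(t) = u + t d`, the derivative of the softmax vector `p(t)` has components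
`pᵢ (dᵢ - m)`, where `m = ∑ pₗ dₗ` is the mean of `d` under the probability vector `p`. Hence its
ℓ1 norm is the mean absolute deviation of `d` under `p`, which by Cauchy–Schwarz is at most the
standard deviation, hence at most `max |dᵢ|` (`sum_mul_abs_sub_mean_le`). The ℓ1 norm of the total
increment is recovered by pairing it with its own signs `sᵢ` and applying the mean value inequality
to the scalar function `t ↦ ∑ sᵢ pᵢ(t)` (`sum_abs_softmax_sub_le`). General `β` is a rescaling.
-/

/-- The mean absolute deviation of a quantity bounded by `M` is at most `M` (and not merely `2 M`):
it is bounded by the standard deviation. -/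
lemma sum_mul_abs_sub_mean_le {n : ℕ} (p d : Fin n → ℝ) (M : ℝ) (hp : ∀ i, 0 ≤ p i)
    (hp1 : ∑ i, p i = 1) (hM : 0 ≤ M) (hd : ∀ i, |d i| ≤ M) :
    ∑ i, p i * |d i - ∑ l, p l * d l| ≤ M := by
  set m := ∑ l, p l * d l with hm
  have hcs : (∑ i, p i * |d i - m|) ^ 2 ≤ (∑ i, p i) * ∑ i, p i * (d i - m) ^ 2 := by
    refine Finset.sum_sq_le_sum_mul_sum_of_sq_le_mul _ (fun i _ => hp i)
      (fun i _ => mul_nonneg (hp i) (sq_nonneg _)) (fun i _ => ?_)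
    refine le_of_eq ?_
    rw [mul_pow, sq_abs]
    ring
  have hvar : ∑ i, p i * (d i - m) ^ 2 = ∑ i, p i * d i ^ 2 - m ^ 2 := by
    have h : ∀ i, p i * (d i - m) ^ 2 = p i * d i ^ 2 - 2 * m * (p i * d i) + m ^ 2 * p i :=
      fun i => by ring
    simp_rw [h]
    rw [Finset.sum_add_distrib, Finset.sum_sub_distrib, ← Finset.mul_sum, ← Finset.mul_sum,
      ← hm, hp1]
    ring
  have hsq : ∑ i, p i * d i ^ 2 ≤ M ^ 2 := by
    calc ∑ i, p i * d i ^ 2 ≤ ∑ i, p i * M ^ 2 := by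
          refine Finset.sum_le_sum fun i _ => mul_le_mul_of_nonneg_left ?_ (hp i)
          exact sq_le_sq' (abs_le.1 (hd i)).1 (abs_le.1 (hd i)).2
      _ = M ^ 2 := by rw [← Finset.sum_mul, hp1, one_mul]
  refine abs_le_of_sq_le_sq' ?_ hM |>.2
  rw [hp1, one_mul, hvar] at hcs
  nlinarith [sq_nonneg m]

/-- The case `β = 1`, with `M` any bound for the sup norm of the displacement. -/
lemma sum_abs_softmax_sub_le {n : ℕ} (hn : 0 < n) (u v : Fin n → ℝ) (M : ℝ) (hM : 0 ≤ M)
    (hd : ∀ i, |v i - u i| ≤ M) :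
    ∑ i, |Real.exp (v i) / (∑ l, Real.exp (v l)) -
          Real.exp (u i) / (∑ l, Real.exp (u l))| ≤ M := by
  have : Nonempty (Fin n) := ⟨⟨0, hn⟩⟩
  set d : Fin n → ℝ := fun i => v i - u i with hdd
  set e : ℝ → Fin n → ℝ := fun t i => Real.exp (u i + t * d i) with he
  set Z : ℝ → ℝ := fun t => ∑ l, e t l with hZ
  have hZpos : ∀ t, 0 < Z t := fun t =>
    Finset.sum_pos (fun i _ => Real.exp_pos _) Finset.univ_nonempty
  set s : Fin n → ℝ := fun i =>
    SignType.sign (e 1 i / Z 1 - e 0 i / Z 0) with hs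
  have hs1 : ∀ i, |s i| ≤ 1 := by
    intro i
    simp only [hs]
    rcases SignType.sign (e 1 i / Z 1 - e 0 i / Z 0) <;> simp
  have hderE : ∀ t i, HasDerivAt (fun t => e t i) (e t i * d i) t := by
    intro t i
    have h := (((hasDerivAt_id t).mul_const (d i)).const_add (u i)).exp
    simpa [he] using h
  have hderZ : ∀ t, HasDerivAt Z (∑ l, e t l * d l) t := fun t =>
    HasDerivAt.fun_sum fun l _ => hderE t l
  have hder : ∀ t, HasDerivAt (fun t => ∑ i, s i * (e t i / Z t))
      (∑ i, s i * (e t i / Z t * (d i - ∑ l, e t l / Z t * d l))) t := by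
    intro t
    refine HasDerivAt.fun_sum fun i _ => HasDerivAt.const_mul (s i) ?_
    convert (hderE t i).fun_div (hderZ t) (hZpos t).ne' using 1
    have hmean : ∑ l, e t l / Z t * d l = (∑ l, e t l * d l) / Z t := by
      rw [Finset.sum_div]
      exact Finset.sum_congr rfl fun l _ => by ring
    rw [hmean]
    have := (hZpos t).ne'
    field_simp
  have hbound : ∀ t, ‖∑ i, s i * (e t i / Z t * (d i - ∑ l, e t l / Z t * d l))‖ ≤ M := by
    intro t
    have hp : ∀ i, 0 ≤ e t i / Z t := fun i => div_nonneg (Real.exp_pos _).le (hZpos t).le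
    have hp1 : ∑ i, e t i / Z t = 1 := by
      rw [← Finset.sum_div]
      exact div_self (hZpos t).ne'
    refine le_trans ?_ (sum_mul_abs_sub_mean_le (fun i => e t i / Z t) d M hp hp1 hM hd)
    refine (norm_sum_le _ _).trans (Finset.sum_le_sum fun i _ => ?_)
    rw [Real.norm_eq_abs, abs_mul, abs_mul, abs_of_nonneg (hp i)]
    exact mul_le_of_le_one_left (mul_nonneg (hp i) (abs_nonneg _)) (hs1 i)
  have hmv := norm_image_sub_le_of_norm_deriv_le_segment_01'
    (fun t _ => (hder t).hasDerivWithinAt) (fun t _ => hbound t)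
  have he1 : ∀ i, e 1 i = Real.exp (v i) := fun i => by simp [he, hdd]
  have he0 : ∀ i, e 0 i = Real.exp (u i) := fun i => by simp [he]
  have hsum : ∑ i, s i * (e 1 i / Z 1) - ∑ i, s i * (e 0 i / Z 0)
      = ∑ i, |e 1 i / Z 1 - e 0 i / Z 0| := by
    rw [← Finset.sum_sub_distrib]
    refine Finset.sum_congr rfl fun i _ => ?_
    rw [← mul_sub]
    exact sign_mul_self _
  have := (le_abs_self _).trans hmv
  rw [hsum] at this
  simpa only [hZ, he1, he0] using this

/-- Lipschitz continuity of the softmax map from ℓ∞ to ℓ1: for `β > 0` and all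
`y, y' ∈ ℝⁿ`, `Σᵢ |σ_β(y')ᵢ − σ_β(y)ᵢ| ≤ (1/β) maxᵢ |y'ᵢ − yᵢ|`.
Here `σ_β(y)ᵢ = exp(yᵢ/β)/Σₗ exp(yₗ/β)`, and the norm on `Fin n → ℝ`
is the sup (ℓ∞) norm, so `‖y' - y‖ = maxᵢ |y'ᵢ − yᵢ|`. -/
theorem softmax_lipschitz_linf_l1 (n : ℕ) (hn : 0 < n) (β : ℝ) (hβ : 0 < β)
    (y y' : Fin n → ℝ) :
    ∑ i, |Real.exp (y' i / β) / (∑ l, Real.exp (y' l / β)) -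
          Real.exp (y i / β) / (∑ l, Real.exp (y l / β))|
      ≤ (1 / β) * ‖y' - y‖ := by
  refine sum_abs_softmax_sub_le hn (fun i => y i / β) (fun i => y' i / β) _ (by positivity)
    fun i => ?_
  rw [← sub_div, abs_div, abs_of_pos hβ, div_eq_inv_mul, one_div]
  exact mul_le_mul_of_nonneg_left (norm_le_pi_norm (y' - y) i) (by positivity)
end
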